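/- arXiv:1411.1371 — 2 statements merged into one kernel-verified Lean document; each statement's English description precedes it below -/
import Mathlib

section
/- Let q ∈ (0,1), k, n ∈ ℕ₀ with k ≤ n, and let z ≥ 0 be real. Then (q^{z+k};q)_{n-k} / (1-q)^{n-k} ≤ ([n]_q! / [k]_q!) · [1+n]_q^{z}. -/
/-!
The left-hand side is `∏_{k ≤ j < n} [z+j]_q`. The function `x ↦ [x]_q` is log-concave, so
extrapolating it from `x` and `x + 1` overestimates it beyond `x + 1`:
`[x+z]_q ≤ [x]_q ([x+1]_q / [x]_q)^z` for `z ≥ 1`. Directly, Bernoulli's inequality gives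
`[z]_q ≤ z`, hence `[x+z]_q / [x]_q ≤ 1 + z s` with `s = q^x / [x]_q`, and a second use of it
gives `1 + z s ≤ (1 + s)^z = ([x+1]_q / [x]_q)^z`. By monotonicity, the bound with `[x+z-1]_q` on
the left holds for all `z ≥ 0`. Taking `x = j + 1` and multiplying over `k ≤ j < n`, the ratios
telescope to `([n+1]_q / [k+1]_q)^z ≤ [n+1]_q^z`.
-/

/-- The real `q`-Pochhammer symbol `(a;q)_n`. -/
noncomputable def qPR (a q : ℝ) (n : ℕ) : ℝ := ∏ k ∈ Finset.range n, (1 - a * q ^ k)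

/-- The `q`-number `[z]_q = (1-q^z)/(1-q)`. -/
noncomputable def qNum (q z : ℝ) : ℝ := (1 - q ^ z) / (1 - q)

/-- The `q`-factorial `[n]_q! = [1]_q [2]_q ⋯ [n]_q`. -/
noncomputable def qFact (q : ℝ) (n : ℕ) : ℝ := ∏ k ∈ Finset.Icc 1 n, qNum q k

lemma prod_range_div_of_ne_zero {G : Type*} [CommGroupWithZero G] {f : ℕ → G}
    (hf : ∀ n, f n ≠ 0) (n : ℕ) : ∏ i ∈ Finset.range n, f (i + 1) / f i = f n / f 0 :=
  Finset.prod_range_induction _ (fun i ↦ f i / f 0) (div_self (hf 0)) n fun i _ ↦ by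
    rw [mul_comm, div_mul_div_cancel₀ (hf i)]

section qNum

variable {q x z : ℝ}

lemma qNum_zero (q : ℝ) : qNum q 0 = 0 := by simp [qNum]

lemma qNum_one (hq : q ≠ 1) : qNum q 1 = 1 := by
  rw [qNum, Real.rpow_one, div_self (sub_ne_zero.2 hq.symm)]

lemma qNum_add (hq : 0 < q) (x y : ℝ) : qNum q (x + y) = qNum q x + q ^ x * qNum q y := by
  simp only [qNum, Real.rpow_add hq]
  ring

lemma qNum_strictMono (hq₀ : 0 < q) (hq₁ : q < 1) : StrictMono (qNum q) := fun _ _ hxy ↦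
  div_lt_div_of_pos_right (sub_lt_sub_left (Real.rpow_lt_rpow_of_exponent_gt hq₀ hq₁ hxy) 1)
    (sub_pos.2 hq₁)

lemma qNum_pos (hq₀ : 0 < q) (hq₁ : q < 1) (hx : 0 < x) : 0 < qNum q x :=
  qNum_zero q ▸ qNum_strictMono hq₀ hq₁ hx

lemma qNum_nonneg (hq₀ : 0 < q) (hq₁ : q < 1) (hx : 0 ≤ x) : 0 ≤ qNum q x :=
  qNum_zero q ▸ (qNum_strictMono hq₀ hq₁).monotone hx

lemma one_le_qNum (hq₀ : 0 < q) (hq₁ : q < 1) (hx : 1 ≤ x) : 1 ≤ qNum q x :=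
  (qNum_one hq₁.ne).ge.trans ((qNum_strictMono hq₀ hq₁).monotone hx)

lemma qNum_le_self (hq₀ : 0 ≤ q) (hq₁ : q < 1) (hz : 1 ≤ z) : qNum q z ≤ z := by
  have bernoulli : 1 + z * (q - 1) ≤ q ^ z := by
    simpa using one_add_mul_self_le_rpow_one_add (s := q - 1) (by linarith) hz
  rw [qNum, div_le_iff₀ (sub_pos.2 hq₁)]
  linarith

lemma qNum_add_le_mul_rpow (hq₀ : 0 < q) (hq₁ : q < 1) (hx : 0 < x) (hz : 1 ≤ z) :
    qNum q (x + z) ≤ qNum q x * (qNum q (x + 1) / qNum q x) ^ z := by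
  have hqx : 0 < qNum q x := qNum_pos hq₀ hq₁ hx
  set s := q ^ x / qNum q x with hs
  have hs₀ : 0 ≤ s := by positivity
  have hratio : qNum q (x + 1) / qNum q x = 1 + s := by
    rw [qNum_add hq₀, qNum_one hq₁.ne, mul_one, add_div, div_self hqx.ne']
  calc
    qNum q (x + z) = qNum q x + q ^ x * qNum q z := qNum_add hq₀ x z
    _ ≤ qNum q x + q ^ x * z := by gcongr; exact qNum_le_self hq₀.le hq₁ hz
    _ = qNum q x * (1 + z * s) := by rw [hs]; field_simp
    _ ≤ qNum q x * (1 + s) ^ z := by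
      gcongr
      exact one_add_mul_self_le_rpow_one_add (by linarith) hz
    _ = qNum q x * (qNum q (x + 1) / qNum q x) ^ z := by rw [hratio]

lemma qNum_add_sub_one_le_mul_rpow (hq₀ : 0 < q) (hq₁ : q < 1) (hx : 0 < x) (hz : 0 ≤ z) :
    qNum q (x + z - 1) ≤ qNum q x * (qNum q (x + 1) / qNum q x) ^ z := by
  have hmono : Monotone (qNum q) := (qNum_strictMono hq₀ hq₁).monotone
  have hqx : 0 < qNum q x := qNum_pos hq₀ hq₁ hx
  rcases le_total z 1 with hz₁ | hz₁
  · have hratio : 1 ≤ qNum q (x + 1) / qNum q x := (one_le_div hqx).2 (hmono (by linarith))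
    calc
      qNum q (x + z - 1) ≤ qNum q x := hmono (by linarith)
      _ ≤ qNum q x * (qNum q (x + 1) / qNum q x) ^ z :=
        le_mul_of_one_le_right hqx.le (Real.one_le_rpow hratio hz)
  · exact (hmono (by linarith)).trans (qNum_add_le_mul_rpow hq₀ hq₁ hx hz₁)

lemma prod_qNum_div_rpow (hq₀ : 0 < q) (hq₁ : q < 1) (hx : 0 < x) (z : ℝ) (m : ℕ) :
    ∏ j ∈ Finset.range m, (qNum q (x + j + 1) / qNum q (x + j)) ^ z =
      (qNum q (x + m) / qNum q x) ^ z := by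
  have hpos (j : ℕ) : 0 < qNum q (x + j) := qNum_pos hq₀ hq₁ (by positivity)
  simp only [add_assoc x, ← Nat.cast_succ]
  rw [Real.finsetProd_rpow _ _ fun j _ ↦ (div_pos (hpos (j + 1)) (hpos j)).le,
    prod_range_div_of_ne_zero fun j ↦ (hpos j).ne', Nat.cast_zero, add_zero]

end qNum

lemma qPR_rpow_div_pow {q : ℝ} (hq : 0 < q) (x : ℝ) (m : ℕ) :
    qPR (q ^ x) q m / (1 - q) ^ m = ∏ j ∈ Finset.range m, qNum q (x + j) := by
  simp only [qPR, qNum, Real.rpow_add hq, Real.rpow_natCast, Finset.prod_div_distrib,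
    Finset.prod_const, Finset.card_range]

lemma qFact_pos {q : ℝ} (hq₀ : 0 < q) (hq₁ : q < 1) (n : ℕ) : 0 < qFact q n :=
  Finset.prod_pos fun _ hj ↦ qNum_pos hq₀ hq₁ (Nat.cast_pos.2 (Finset.mem_Icc.1 hj).1)

lemma qFact_add (q : ℝ) (k m : ℕ) :
    qFact q (k + m) = qFact q k * ∏ j ∈ Finset.range m, qNum q (k + 1 + j) := by
  induction m with
  | zero => simp
  | succ m ih =>
    rw [Finset.prod_range_succ, ← mul_assoc, ← ih, qFact, ← add_assoc,
      Finset.prod_Icc_succ_top (Nat.le_add_left 1 (k + m)), ← qFact]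
    push_cast
    rw [add_right_comm]

theorem stmt3_general {q x z : ℝ} (hq₀ : 0 < q) (hq₁ : q < 1) (hx : 0 ≤ x) (hz : 0 ≤ z)
    (m : ℕ) :
    qPR (q ^ (z + x)) q m / (1 - q) ^ m ≤
      (∏ j ∈ Finset.range m, qNum q (x + 1 + j)) * qNum q (x + 1 + m) ^ z := by
  have hnonneg {y : ℝ} (hy : 0 ≤ y) : 0 ≤ qNum q y := qNum_nonneg hq₀ hq₁ hy
  have hfactor (j : ℕ) : qNum q (z + x + j) ≤
      qNum q (x + 1 + j) * (qNum q (x + 1 + j + 1) / qNum q (x + 1 + j)) ^ z := by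
    convert qNum_add_sub_one_le_mul_rpow hq₀ hq₁ (x := x + 1 + j) (by positivity) hz using 2
    ring
  calc
    qPR (q ^ (z + x)) q m / (1 - q) ^ m = ∏ j ∈ Finset.range m, qNum q (z + x + j) :=
      qPR_rpow_div_pow hq₀ (z + x) m
    _ ≤ ∏ j ∈ Finset.range m,
          qNum q (x + 1 + j) * (qNum q (x + 1 + j + 1) / qNum q (x + 1 + j)) ^ z :=
      Finset.prod_le_prod (fun j _ ↦ hnonneg (by positivity)) fun j _ ↦ hfactor j
    _ = (∏ j ∈ Finset.range m, qNum q (x + 1 + j)) *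
          (qNum q (x + 1 + m) / qNum q (x + 1)) ^ z := by
      rw [Finset.prod_mul_distrib, prod_qNum_div_rpow hq₀ hq₁ (by positivity)]
    _ ≤ (∏ j ∈ Finset.range m, qNum q (x + 1 + j)) * qNum q (x + 1 + m) ^ z := by
      have hlast : 0 ≤ qNum q (x + 1 + m) := hnonneg (by positivity)
      have hfirst : 1 ≤ qNum q (x + 1) := one_le_qNum hq₀ hq₁ (by linarith)
      have hprod : 0 ≤ ∏ j ∈ Finset.range m, qNum q (x + 1 + j) :=
        Finset.prod_nonneg fun j _ ↦ hnonneg (by positivity)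
      exact mul_le_mul_of_nonneg_left
        (Real.rpow_le_rpow (by positivity) (div_le_self hlast hfirst) hz) hprod

theorem stmt3 (q : ℝ) (hq : q ∈ Set.Ioo (0:ℝ) 1) (k n : ℕ) (hkn : k ≤ n)
    (z : ℝ) (hz : 0 ≤ z) :
    qPR (q ^ (z + (k : ℝ))) q (n - k) / (1 - q) ^ (n - k) ≤
      (qFact q n / qFact q k) * qNum q (1 + (n : ℝ)) ^ z := by
  obtain ⟨m, rfl⟩ := Nat.exists_eq_add_of_le hkn
  rw [Nat.add_sub_cancel_left, qFact_add, mul_div_cancel_left₀ _ (qFact_pos hq.1 hq.2 k).ne',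
    Nat.cast_add, ← add_assoc, add_comm 1 (k : ℝ)]
  exact stmt3_general hq.1 hq.2 k.cast_nonneg hz m
end

section
/- Let q ∈ (0,1), α, β ∈ (-1,∞), n ∈ ℕ₀, and x ∈ ℂ. Then the q-Laguerre polynomials satisfy the connection relation L_n^{(α)}(x;q) = (q^{n(α-β)} / (q;q)_n) ∑_{j=0}^n (-1)^{n-j} q^{(n-j)(n-j-1)/2} (q^{n-j+1};q)_j (q^{j-n+β-α+1};q)_{n-j} · L_j^{(β)}(x;q). -/
/-!
Write `h_N(a) = (a;q)_N / (q;q)_N` and `d = q^{α-β}`. Reversing the factor `(q^{-n};q)_k` of the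
`₁φ₁` series gives
`L_n^{(α)}(x;q) = ∑_k (-1)^k q^{k(k-1)} (a x)^k h_{n-k}(a q^k) / (q;q)_k` with `a = q^{α+1}`,
and reversing the last factor of the connection coefficient turns the claim into
`L_n^{(α)}(x;q) = ∑_j d^j h_{n-j}(d) L_j^{(β)}(x;q)`. Comparing coefficients of `x^k`, this is the
`q`-Chu–Vandermonde identity `h_N(d b) = ∑_i d^i h_i(b) h_{N-i}(d)` with `b = q^{β+1+k}` and
`N = n - k`, that is, `F_{db}(t) = F_b(d t) F_d(t)` for the `q`-binomial series
`F_a(t) = ∑_N h_N(a) t^N`. Both sides of the latter have constant term `1` and satisfy the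
functional equation `(1 - t) G(t) = (1 - d b t) G(q t)`, which has only one such solution because
`q` is not a root of unity.
-/

open scoped Real

/-- The complex `q`-Pochhammer symbol `(a;q)_n`. -/
noncomputable def qP (a q : ℂ) (n : ℕ) : ℂ := ∏ k ∈ Finset.range n, (1 - a * q ^ k)

/-- The infinite complex `q`-Pochhammer symbol `(a;q)_∞`. -/
noncomputable def qPInf (a q : ℂ) : ℂ := ∏' k : ℕ, (1 - a * q ^ k)

/-- The basic hypergeometric series `ᵣφₛ(a₁,…,aᵣ; b₁,…,bₛ; q, z)`. -/
noncomputable def qHyp (A B : List ℂ) (q z : ℂ) : ℂ :=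
  ∑' k : ℕ, ((A.map fun a => qP a q k).prod / (qP q q k * (B.map fun b => qP b q k).prod)) *
    ((-1 : ℂ) ^ k * q ^ (k * (k - 1) / 2)) ^ (1 + B.length - A.length) * z ^ k

/-- The positive real power `q ^ e` of `0 < q`, viewed as a complex number. -/
noncomputable def rq (q e : ℝ) : ℂ := ((q ^ e : ℝ) : ℂ)

/-- The `q`-Laguerre polynomial `Lₙ^{(α)}(x; q)`. -/
noncomputable def qLag (n : ℕ) (α q : ℝ) (x : ℂ) : ℂ :=
  (qP (rq q (α + 1)) q n / qP q q n) *
    qHyp [(q : ℂ) ^ (-(n : ℤ))] [rq q (α + 1)] q (-(rq q ((n : ℝ) + α + 1)) * x)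

section QPochhammer

lemma qP_zero (a q : ℂ) : qP a q 0 = 1 := Finset.prod_range_zero _

lemma qP_succ (a q : ℂ) (n : ℕ) : qP a q (n + 1) = qP a q n * (1 - a * q ^ n) :=
  Finset.prod_range_succ _ _

lemma qP_add (a q : ℂ) (m n : ℕ) : qP a q (m + n) = qP a q m * qP (a * q ^ m) q n := by
  simp only [qP, Finset.prod_range_add, pow_add, mul_assoc]

lemma qP_self_mul_qP_pow (q : ℂ) (m n : ℕ) :
    qP q q m * qP (q ^ (m + 1)) q n = qP q q (m + n) := by
  rw [qP_add, pow_succ']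

lemma qP_ne_zero {a q : ℂ} (h : ∀ k : ℕ, a * q ^ k ≠ 1) (n : ℕ) : qP a q n ≠ 0 :=
  Finset.prod_ne_zero_iff.mpr fun k _ => sub_ne_zero.mpr (h k).symm

lemma pow_succ_ne_one {M : Type*} [Monoid M] {q : M} (hq : ¬IsOfFinOrder q) (k : ℕ) :
    q ^ (k + 1) ≠ 1 := fun h =>
  hq (isOfFinOrder_iff_pow_eq_one.mpr ⟨k + 1, k.succ_pos, h⟩)

lemma qP_self_ne_zero {q : ℂ} (hq : ¬IsOfFinOrder q) (n : ℕ) : qP q q n ≠ 0 :=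
  qP_ne_zero (fun k => pow_succ' q k ▸ pow_succ_ne_one hq k) n

lemma prod_range_pow_id {M : Type*} [CommMonoid M] (q : M) (m : ℕ) :
    ∏ i ∈ Finset.range m, q ^ i = q ^ (m * (m - 1) / 2) := by
  rw [Finset.prod_pow_eq_pow_sum, Finset.sum_range_id]

lemma qP_eq_mul_qP_inv {a q : ℂ} (ha : a ≠ 0) (hq : q ≠ 0) (m : ℕ) :
    qP a q m = (-a) ^ m * q ^ (m * (m - 1) / 2) * qP (a⁻¹ * q ^ (1 - m : ℤ)) q m := by
  have factor_eq : ∀ i ∈ Finset.range m,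
      1 - a * q ^ i = -a * q ^ i * (1 - a⁻¹ * q ^ (1 - m : ℤ) * q ^ (m - 1 - i)) := by
    intro i hi
    have hpow : q ^ i * (q ^ (1 - m : ℤ) * q ^ (m - 1 - i)) = 1 := by
      have := Finset.mem_range.mp hi
      rw [← zpow_natCast, ← zpow_natCast, ← zpow_add₀ hq, ← zpow_add₀ hq,
        show (i : ℤ) + (1 - m + (m - 1 - i : ℕ)) = 0 by omega, zpow_zero]
    linear_combination (-a * a⁻¹) * hpow - mul_inv_cancel₀ ha
  calc qP a q m
      = ∏ i ∈ Finset.range m, -a * q ^ i * (1 - a⁻¹ * q ^ (1 - m : ℤ) * q ^ (m - 1 - i)) :=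
        Finset.prod_congr rfl factor_eq
    _ = (-a) ^ m * q ^ (m * (m - 1) / 2) * qP (a⁻¹ * q ^ (1 - m : ℤ)) q m := by
        rw [Finset.prod_mul_distrib, Finset.prod_mul_distrib, Finset.prod_const,
          Finset.card_range, prod_range_pow_id,
          Finset.prod_range_reflect fun k => 1 - a⁻¹ * q ^ (1 - m : ℤ) * q ^ k, qP]

lemma qP_zpow_neg_mul {q : ℂ} (hq : q ≠ 0) (m k : ℕ) :
    qP (q ^ (-(m + k : ℕ) : ℤ)) q k * q ^ ((m + k) * k) * qP q q m =
      (-1) ^ k * q ^ (k * (k - 1) / 2) * qP q q (m + k) := by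
  have base_eq : (q ^ (m + 1))⁻¹ * q ^ (1 - k : ℤ) = q ^ (-(m + k : ℕ) : ℤ) := by
    rw [← zpow_natCast, ← zpow_neg, ← zpow_add₀ hq]
    congr 1
    push_cast
    ring
  have exponent_eq : (m + k) * k = k * (k - 1) / 2 + (m + 1) * k + k * (k - 1) / 2 := by
    have := Nat.div_two_mul_two_of_even k.even_mul_pred_self
    cases k with
    | zero => simp
    | succ k => grind
  have reflect := qP_eq_mul_qP_inv (pow_ne_zero (m + 1) hq) hq k
  rw [base_eq, neg_pow, ← pow_mul] at reflect
  have sign : (-1 : ℂ) ^ k * (-1) ^ k = 1 := by rw [← mul_pow]; simp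
  rw [← qP_self_mul_qP_pow, reflect, exponent_eq, pow_add, pow_add]
  linear_combination (-(qP (q ^ (-(m + k : ℕ) : ℤ)) q k) * q ^ (k * (k - 1) / 2) *
    q ^ ((m + 1) * k) * q ^ (k * (k - 1) / 2) * qP q q m) * sign

lemma qP_zpow_neg_eq_zero {q : ℂ} (hq : q ≠ 0) {n k : ℕ} (hk : n < k) :
    qP (q ^ (-(n : ℤ))) q k = 0 := by
  refine Finset.prod_eq_zero (Finset.mem_range.mpr hk) ?_
  rw [zpow_neg, zpow_natCast, inv_mul_cancel₀ (pow_ne_zero _ hq), sub_self]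

end QPochhammer

section FunctionalEquation

open PowerSeries

lemma one_sub_X_mul_eq_iff_coeff {R : Type*} [CommRing R] {q a : R} {G : R⟦X⟧} :
    (1 - X) * G = (1 - C a * X) * rescale q G ↔
      ∀ n, (1 - q ^ (n + 1)) * coeff (n + 1) G = (1 - a * q ^ n) * coeff n G := by
  have coeff_zero : coeff 0 ((1 - X) * G) = coeff 0 ((1 - C a * X) * rescale q G) := by
    have := coeff_rescale G q 0
    rw [pow_zero, one_mul] at this
    simp only [sub_mul, one_mul, map_sub, mul_assoc, coeff_zero_X_mul, coeff_C_mul, mul_zero, this]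
  have coeff_succ (n : ℕ) :
      coeff (n + 1) ((1 - X) * G) = coeff (n + 1) ((1 - C a * X) * rescale q G) ↔
        (1 - q ^ (n + 1)) * coeff (n + 1) G = (1 - a * q ^ n) * coeff n G := by
    simp only [sub_mul, one_mul, map_sub, mul_assoc, coeff_succ_X_mul, coeff_C_mul, coeff_rescale]
    constructor <;> intro h <;> linear_combination h
  simp only [PowerSeries.ext_iff, ← coeff_succ]
  exact ⟨fun h n => h (n + 1), fun h n => n.casesOn coeff_zero h⟩

lemma eq_of_one_sub_X_mul_eq {R : Type*} [CommRing R] [NoZeroDivisors R] {q a : R}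
    (hq : ¬IsOfFinOrder q) {F G : R⟦X⟧} (h₀ : coeff 0 F = coeff 0 G)
    (hF : (1 - X) * F = (1 - C a * X) * rescale q F)
    (hG : (1 - X) * G = (1 - C a * X) * rescale q G) : F = G := by
  rw [one_sub_X_mul_eq_iff_coeff] at hF hG
  ext n
  induction n with
  | zero => exact h₀
  | succ n ih =>
    apply mul_left_cancel₀ (sub_ne_zero.mpr (pow_succ_ne_one hq n).symm)
    rw [hF, hG, ih]

end FunctionalEquation

section QBinomial

open PowerSeries

/-- The coefficient `h_N(a) = (a;q)_N / (q;q)_N` of `t^N` in the `q`-binomial series. -/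
noncomputable def qBinCoeff (q a : ℂ) (N : ℕ) : ℂ := qP a q N / qP q q N

/-- The `q`-binomial series `F_a(t) = ∑ h_N(a) t^N`, as a formal power series; it generates the
coefficients in the `q`-Chu–Vandermonde identity. -/
noncomputable def qBinSeries (q a : ℂ) : ℂ⟦X⟧ := mk (qBinCoeff q a)

variable {q : ℂ}

lemma coeff_zero_qBinSeries (a : ℂ) : coeff 0 (qBinSeries q a) = 1 := by
  rw [qBinSeries, coeff_mk, qBinCoeff, qP_zero, qP_zero, div_one]

lemma one_sub_pow_mul_qBinCoeff_succ (hq : ¬IsOfFinOrder q) (a : ℂ) (n : ℕ) :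
    (1 - q ^ (n + 1)) * qBinCoeff q a (n + 1) = (1 - a * q ^ n) * qBinCoeff q a n := by
  have hn := qP_self_ne_zero hq n
  have hfactor : 1 - q ^ (n + 1) ≠ 0 := sub_ne_zero.mpr (pow_succ_ne_one hq n).symm
  rw [qBinCoeff, qBinCoeff, qP_succ, qP_succ, ← pow_succ']
  field_simp

lemma one_sub_X_mul_qBinSeries (hq : ¬IsOfFinOrder q) (a : ℂ) :
    (1 - X) * qBinSeries q a = (1 - C a * X) * rescale q (qBinSeries q a) := by
  rw [one_sub_X_mul_eq_iff_coeff]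
  simpa only [qBinSeries, coeff_mk] using one_sub_pow_mul_qBinCoeff_succ hq a

lemma one_sub_C_mul_X_mul_rescale_qBinSeries (hq : ¬IsOfFinOrder q) (d b : ℂ) :
    (1 - C d * X) * rescale d (qBinSeries q b) =
      (1 - C (d * b) * X) * rescale q (rescale d (qBinSeries q b)) := by
  have rescale_C : rescale d (C b) = C b := by
    ext n
    cases n <;> simp [coeff_rescale, coeff_C]
  have h := congrArg (rescale d) (one_sub_X_mul_qBinSeries hq b)
  simp only [map_mul, map_sub, map_one, rescale_X, rescale_C] at h
  rw [h, rescale_rescale, rescale_rescale, mul_comm d q, map_mul]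
  ring

lemma rescale_qBinSeries_mul (hq : ¬IsOfFinOrder q) (d b : ℂ) :
    rescale d (qBinSeries q b) * qBinSeries q d = qBinSeries q (d * b) := by
  have one_sub_ne_zero : (1 - C d * X : ℂ⟦X⟧) ≠ 0 := fun h => by
    simpa using congrArg (coeff 0) h
  refine eq_of_one_sub_X_mul_eq hq ?_ (mul_left_cancel₀ one_sub_ne_zero ?_)
    (one_sub_X_mul_qBinSeries hq (d * b))
  · simp only [coeff_mul, Finset.Nat.antidiagonal_zero, Finset.sum_singleton, coeff_rescale,
      coeff_zero_qBinSeries, pow_zero, mul_one]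
  · rw [map_mul (rescale q)]
    linear_combination
      (1 - X) * qBinSeries q d * one_sub_C_mul_X_mul_rescale_qBinSeries hq d b +
        (1 - C (d * b) * X) * rescale q (rescale d (qBinSeries q b)) *
          one_sub_X_mul_qBinSeries hq d

lemma qBinCoeff_mul (hq : ¬IsOfFinOrder q) (d b : ℂ) (N : ℕ) :
    qBinCoeff q (d * b) N =
      ∑ i ∈ Finset.range (N + 1), d ^ i * qBinCoeff q b i * qBinCoeff q d (N - i) := by
  have h := congrArg (coeff N) (rescale_qBinSeries_mul hq d b)
  rw [coeff_mul, Finset.Nat.sum_antidiagonal_eq_sum_range_succ_mk] at h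
  simpa only [qBinSeries, coeff_rescale, coeff_mk] using h.symm

end QBinomial

section QLaguerre

/-- The `q`-Laguerre polynomial with `q^{α+1}` replaced by a free parameter `a`. Its coefficients
are written as polynomials in `a`, so that the connection relation needs no condition on `a`. -/
noncomputable def qLaguerre (q a : ℂ) (n : ℕ) (x : ℂ) : ℂ :=
  ∑ k ∈ Finset.range (n + 1),
    (-1) ^ k * q ^ (k * (k - 1)) * (a * x) ^ k / qP q q k * qBinCoeff q (a * q ^ k) (n - k)

variable {q : ℂ}

lemma qLaguerre_mul (hq : ¬IsOfFinOrder q) (d b : ℂ) (n : ℕ) (x : ℂ) :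
    qLaguerre q (d * b) n x =
      ∑ j ∈ Finset.range (n + 1), d ^ j * qBinCoeff q d (n - j) * qLaguerre q b j x := by
  let term (k i : ℕ) : ℂ := d ^ (k + i) * qBinCoeff q d (n - (k + i)) *
    ((-1) ^ k * q ^ (k * (k - 1)) * (b * x) ^ k / qP q q k * qBinCoeff q (b * q ^ k) i)
  calc qLaguerre q (d * b) n x
      = ∑ k ∈ Finset.range (n + 1), ∑ i ∈ Finset.range (n + 1 - k), term k i := by
        refine Finset.sum_congr rfl fun k hk => ?_
        rw [mul_assoc d b (q ^ k), qBinCoeff_mul hq, Finset.mul_sum,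
          ← Nat.sub_add_comm (Finset.mem_range_succ_iff.mp hk)]
        refine Finset.sum_congr rfl fun i _ => ?_
        simp only [term, pow_add, mul_pow, Nat.sub_add_eq]
        ring
    _ = ∑ j ∈ Finset.range (n + 1), ∑ k ∈ Finset.range (j + 1), term k (j - k) :=
        (Finset.sum_range_diag_flip (n + 1) term).symm
    _ = ∑ j ∈ Finset.range (n + 1), d ^ j * qBinCoeff q d (n - j) * qLaguerre q b j x := by
        refine Finset.sum_congr rfl fun j _ => ?_
        rw [qLaguerre, Finset.mul_sum]
        refine Finset.sum_congr rfl fun k hk => ?_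
        simp only [term, Nat.add_sub_cancel' (Finset.mem_range_succ_iff.mp hk)]

lemma qHyp_term_eq_qLaguerre_term {a : ℂ} (hq0 : q ≠ 0) (hq : ¬IsOfFinOrder q)
    (ha : ∀ k : ℕ, a * q ^ k ≠ 1) (m k : ℕ) (x : ℂ) :
    qP a q (m + k) / qP q q (m + k) *
        (qP (q ^ (-(m + k : ℕ) : ℤ)) q k / (qP q q k * qP a q k) *
          ((-1) ^ k * q ^ (k * (k - 1) / 2)) * (-(q ^ (m + k) * a) * x) ^ k) =
      (-1) ^ k * q ^ (k * (k - 1)) * (a * x) ^ k / qP q q k * qBinCoeff q (a * q ^ k) m := by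
  have hn := qP_self_ne_zero hq (m + k)
  have hm := qP_self_ne_zero hq m
  have hk := qP_self_ne_zero hq k
  have hak := qP_ne_zero ha k
  have reverse := qP_zpow_neg_mul hq0 m k
  have split : qP a q (m + k) = qP a q k * qP (a * q ^ k) q m := by rw [add_comm, qP_add]
  have power : (-(q ^ (m + k) * a) * x) ^ k = (-1) ^ k * q ^ ((m + k) * k) * (a * x) ^ k := by
    rw [pow_mul, ← mul_pow, ← mul_pow]
    ring
  have square : q ^ (k * (k - 1)) = q ^ (k * (k - 1) / 2) * q ^ (k * (k - 1) / 2) := by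
    rw [← pow_add, ← mul_two, Nat.div_two_mul_two_of_even k.even_mul_pred_self]
  have sign : (-1 : ℂ) ^ k * (-1) ^ k = 1 := by rw [← mul_pow]; simp
  rw [split, power, square, qBinCoeff]
  field_simp
  linear_combination qP (a * q ^ k) q m * (a * x) ^ k *
    ((-1) ^ k * reverse + q ^ (k * (k - 1) / 2) * qP q q (m + k) * sign)

lemma qLaguerre_eq_qHyp {a : ℂ} (hq0 : q ≠ 0) (hq : ¬IsOfFinOrder q)
    (ha : ∀ k : ℕ, a * q ^ k ≠ 1) (n : ℕ) (x : ℂ) :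
    qLaguerre q a n x =
      qP a q n / qP q q n * qHyp [q ^ (-(n : ℤ))] [a] q (-(q ^ n * a) * x) := by
  rw [qHyp, tsum_eq_sum (s := Finset.range (n + 1)), Finset.mul_sum]
  · refine Finset.sum_congr rfl fun k hk => ?_
    obtain ⟨m, rfl⟩ := Nat.exists_eq_add_of_le' (Finset.mem_range_succ_iff.mp hk)
    simpa using (qHyp_term_eq_qLaguerre_term hq0 hq ha m k x).symm
  · intro k hk
    have hnk : n < k := by simpa using hk
    simp only [List.map_cons, List.prod_cons, qP_zpow_neg_eq_zero hq0 hnk, zero_mul, zero_div]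

lemma qLaguerre_connection_coeff {d : ℂ} (hq0 : q ≠ 0) (hq : ¬IsOfFinOrder q) (hd : d ≠ 0)
    (m j : ℕ) :
    d ^ (m + j) / qP q q (m + j) *
        ((-1) ^ m * q ^ (m * (m - 1) / 2) * qP (q ^ (m + 1)) q j *
          qP (d⁻¹ * q ^ (1 - m : ℤ)) q m) =
      d ^ j * qBinCoeff q d m := by
  have hm := qP_self_ne_zero hq m
  have hn := qP_self_ne_zero hq (m + j)
  rw [qBinCoeff, qP_eq_mul_qP_inv hd hq0 m, neg_pow d]
  field_simp
  rw [← qP_self_mul_qP_pow]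
  ring

end QLaguerre

section RealBase

lemma not_isOfFinOrder_ofReal {q : ℝ} (hq0 : 0 ≤ q) (hq1 : q ≠ 1) :
    ¬IsOfFinOrder (q : ℂ) := by
  rw [isOfFinOrder_iff_pow_eq_one]
  rintro ⟨n, hn, h⟩
  exact hq1 ((pow_eq_one_iff_of_nonneg hq0 hn.ne').mp (by exact_mod_cast h))

lemma rq_intCast (q : ℝ) (n : ℤ) : rq q n = (q : ℂ) ^ n := by
  simp [rq]

lemma rq_natCast (q : ℝ) (n : ℕ) : rq q n = (q : ℂ) ^ n := by
  simp [rq]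

variable {q : ℝ}

lemma rq_add (hq : 0 < q) (s t : ℝ) : rq q (s + t) = rq q s * rq q t := by
  simp [rq, Real.rpow_add hq]

lemma rq_neg (hq : 0 ≤ q) (s : ℝ) : rq q (-s) = (rq q s)⁻¹ := by
  simp [rq, Real.rpow_neg hq]

lemma rq_natCast_mul (hq : 0 ≤ q) (n : ℕ) (s : ℝ) : rq q (n * s) = rq q s ^ n := by
  simp [rq, mul_comm (n : ℝ) s, Real.rpow_mul hq]

lemma rq_ne_zero (hq : 0 < q) (s : ℝ) : rq q s ≠ 0 :=
  Complex.ofReal_ne_zero.mpr (Real.rpow_pos_of_pos hq s).ne'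

lemma rq_ne_one (hq0 : 0 < q) (hq1 : q ≠ 1) {s : ℝ} (hs : s ≠ 0) : rq q s ≠ 1 := by
  rw [rq, Complex.ofReal_ne_one, ← Real.rpow_zero q]
  exact fun h => hs ((Real.rpow_right_inj hq0 hq1).mp h)

lemma qLag_eq_qLaguerre (hq0 : 0 < q) (hq1 : q ≠ 1) {α : ℝ} (hα : ∀ k : ℕ, α ≠ -(k + 1))
    (n : ℕ) (x : ℂ) : qLag n α q x = qLaguerre q (rq q (α + 1)) n x := by
  have param_ne_one (k : ℕ) : rq q (α + 1) * (q : ℂ) ^ k ≠ 1 := by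
    rw [← rq_natCast, ← rq_add hq0]
    exact rq_ne_one hq0 hq1 fun h => hα k (by linarith)
  rw [qLaguerre_eq_qHyp (Complex.ofReal_ne_zero.mpr hq0.ne')
    (not_isOfFinOrder_ofReal hq0.le hq1) param_ne_one, qLag, add_assoc, rq_add hq0 n, rq_natCast]

end RealBase

theorem stmt15_general {q : ℝ} (hq0 : 0 < q) (hq1 : q ≠ 1) {α β : ℝ}
    (hα : ∀ k : ℕ, α ≠ -(k + 1)) (hβ : ∀ k : ℕ, β ≠ -(k + 1)) (n : ℕ) (x : ℂ) :
    qLag n α q x =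
      (rq q ((n : ℝ) * (α - β)) / qP q q n) *
        ∑ j ∈ Finset.range (n + 1),
          (-1 : ℂ) ^ (n - j) * (q : ℂ) ^ ((n - j) * (n - j - 1) / 2) *
            qP ((q : ℂ) ^ (n - j + 1)) q j *
            qP (rq q ((j : ℝ) - (n : ℝ) + β - α + 1)) q (n - j) *
            qLag j β q x := by
  have hqC : ¬IsOfFinOrder (q : ℂ) := not_isOfFinOrder_ofReal hq0.le hq1
  have param_eq : rq q (α + 1) = rq q (α - β) * rq q (β + 1) := by
    rw [← rq_add hq0, ← add_assoc, sub_add_cancel]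
  rw [qLag_eq_qLaguerre hq0 hq1 hα, param_eq, qLaguerre_mul hqC, Finset.mul_sum]
  refine Finset.sum_congr rfl fun j hj => ?_
  obtain ⟨m, rfl⟩ := Nat.exists_eq_add_of_le' (Finset.mem_range_succ_iff.mp hj)
  have base_eq : rq q ((j : ℝ) - (m + j : ℕ) + β - α + 1) =
      (rq q (α - β))⁻¹ * (q : ℂ) ^ (1 - m : ℤ) := by
    rw [← rq_neg hq0.le, ← rq_intCast, ← rq_add hq0]
    congr 1
    push_cast
    ring
  rw [← qLag_eq_qLaguerre hq0 hq1 hβ, ← mul_assoc, Nat.add_sub_cancel, base_eq,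
    rq_natCast_mul hq0.le, qLaguerre_connection_coeff (Complex.ofReal_ne_zero.mpr hq0.ne') hqC
      (rq_ne_zero hq0 (α - β))]

theorem stmt15 (q : ℝ) (hq : q ∈ Set.Ioo (0:ℝ) 1)
    (α β : ℝ) (hα : -1 < α) (hβ : -1 < β) (n : ℕ) (x : ℂ) :
    qLag n α q x =
      (rq q ((n : ℝ) * (α - β)) / qP q q n) *
        ∑ j ∈ Finset.range (n + 1),
          (-1 : ℂ) ^ (n - j) * (q : ℂ) ^ ((n - j) * (n - j - 1) / 2) *
            qP ((q : ℂ) ^ (n - j + 1)) q j *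
            qP (rq q ((j : ℝ) - (n : ℝ) + β - α + 1)) q (n - j) *
            qLag j β q x :=
  stmt15_general hq.1 hq.2.ne (fun _ => (hα.trans_le' (by simp)).ne')
    (fun _ => (hβ.trans_le' (by simp)).ne') n x
end
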